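/- Let n ≥ 1. There is a constant C depending only on n with the following property: for every C¹ vector field ζ : ℝⁿ → ℝⁿ, every C² matrix-valued field k : ℝⁿ → ℝ^{n×n}, every x ∈ ℝⁿ and Ψ = id + ζ: ‖(Ψ*k)(x) − k(x) − (L_ζ k)(x)‖ ≤ C (‖ζ(x)‖ + ‖Dζ(x)‖)² · sup_{t∈[0,1]} ( ‖k‖ + ‖Dk‖ + ‖D²k‖ )(x + tζ(x)), where (L_ζ k)_{ij} = ∑_c ζ_c ∂_c k_{ij} + ∑_a k_{aj} ∂_i ζ_a + ∑_b k_{ib} ∂_j ζ_b is the Lie derivative of k along ζ. -/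

import Mathlib

/-!
Write `u a = ∂_i ζ_a(x)` and `v b = ∂_j ζ_b(x)`. Expanding the two factors `δ + u`, `δ + v`, the remainder
`Ψ*k - k - L_ζ k` at `x` is the sum of four terms:

* the Taylor remainder `k_{ij}(x + ζ) - k_{ij}(x) - ∑_c ζ_c ∂_c k_{ij}(x)`, of size `‖ζ‖² sup ‖D²k‖`
  (`abs_taylor_remainder_le`);
* `∑_a (k_{aj}(x + ζ) - k_{aj}(x)) u a` and its mirror image in `j`, of size `n ‖ζ‖ ‖Dζ‖ sup ‖Dk‖`
  (`abs_increment_le`);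
* `∑_{a,b} k_{ab}(x + ζ) u a v b`, of size `n² ‖Dζ‖² sup ‖k‖`.

Both estimates on `k` are the mean value inequality along the segment `t ↦ x + tζ(x)`, and the total is
at most `(1 + 2n + n²) (‖ζ‖ + ‖Dζ‖)²` times the supremum. That supremum is an iterated real `⨆`, so
bounding by it requires boundedness, which comes from compactness of `[0,1]`
(`le_biSup_Icc_of_continuous`).
-/

/-- The `i`-th partial derivative of a real-valued function on Euclidean space. -/
noncomputable def pd {n : ℕ} (i : Fin n) (f : EuclideanSpace ℝ (Fin n) → ℝ)
    (x : EuclideanSpace ℝ (Fin n)) : ℝ :=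
  fderiv ℝ f x (EuclideanSpace.single i 1)

/-- The pullback of a matrix-valued field `k` by `Ψ = id + ζ`:
`(Ψ*k)_{ij}(x) = ∑_{a,b} k_{ab}(x + ζ(x)) (δ_{ai} + ∂_i ζ_a(x)) (δ_{bj} + ∂_j ζ_b(x))`. -/
noncomputable def pullback {n : ℕ}
    (ζ : EuclideanSpace ℝ (Fin n) → EuclideanSpace ℝ (Fin n))
    (k : EuclideanSpace ℝ (Fin n) → Fin n → Fin n → ℝ)
    (x : EuclideanSpace ℝ (Fin n)) (i j : Fin n) : ℝ :=
  ∑ a, ∑ b, k (x + ζ x) a b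
    * ((if a = i then (1:ℝ) else 0) + pd i (fun y => ζ y a) x)
    * ((if b = j then (1:ℝ) else 0) + pd j (fun y => ζ y b) x)

/-- The Lie derivative of a matrix field `k` along `ζ`:
`(L_ζ k)_{ij} = ∑_c ζ_c ∂_c k_{ij} + ∑_a k_{aj} ∂_i ζ_a + ∑_b k_{ib} ∂_j ζ_b`. -/
noncomputable def lieDer {n : ℕ}
    (ζ : EuclideanSpace ℝ (Fin n) → EuclideanSpace ℝ (Fin n))
    (k : EuclideanSpace ℝ (Fin n) → Fin n → Fin n → ℝ)
    (x : EuclideanSpace ℝ (Fin n)) (i j : Fin n) : ℝ :=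
  (∑ c, ζ x c * pd c (fun y => k y i j) x)
    + (∑ a, k x a j * pd i (fun y => ζ y a) x)
    + ∑ b, k x i b * pd j (fun y => ζ y b) x

/-- The junk value `0` of the inner supremum at `t ∉ [0,1]` can only enlarge the right-hand side. -/
lemma le_biSup_Icc_of_continuous {F : ℝ → ℝ} (hF : Continuous F) {t : ℝ}
    (ht : t ∈ Set.Icc (0:ℝ) 1) : F t ≤ ⨆ s ∈ Set.Icc (0:ℝ) 1, F s := by
  obtain ⟨B, hB⟩ := (isCompact_Icc (a := (0:ℝ)) (b := 1)).bddAbove_image hF.continuousOn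
  have hbdd : BddAbove (Set.range fun s : ℝ => ⨆ _ : s ∈ Set.Icc (0:ℝ) 1, F s) := by
    refine ⟨max B 0, ?_⟩
    rintro _ ⟨s, rfl⟩
    by_cases hs : s ∈ Set.Icc (0:ℝ) 1
    · simp only [ciSup_pos hs]
      exact (hB ⟨s, hs, rfl⟩).trans (le_max_left _ _)
    · have : IsEmpty (s ∈ Set.Icc (0:ℝ) 1) := ⟨hs⟩
      simp only [Real.iSup_of_isEmpty]
      exact le_max_right _ _
  have h := le_ciSup hbdd t
  simpa only [ciSup_pos ht] using h

lemma fderiv_apply_eq_sum_pd {n : ℕ} (f : EuclideanSpace ℝ (Fin n) → ℝ)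
    (x v : EuclideanSpace ℝ (Fin n)) : fderiv ℝ f x v = ∑ c, v c * pd c f x := by
  have hv : v = ∑ c, v c • EuclideanSpace.single c (1:ℝ) := by
    simpa using ((EuclideanSpace.basisFun (Fin n) ℝ).sum_repr v).symm
  conv_lhs => rw [hv]
  simp [map_sum, pd]

lemma contDiff_pd {n : ℕ} {f : EuclideanSpace ℝ (Fin n) → ℝ} (hf : ContDiff ℝ 2 f) (c : Fin n) :
    ContDiff ℝ 1 (pd c f) :=
  (hf.fderiv_right (m := 1) (by norm_num)).clm_apply contDiff_const

lemma continuous_pd {n : ℕ} {f : EuclideanSpace ℝ (Fin n) → ℝ} (hf : ContDiff ℝ 1 f) (c : Fin n) :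
    Continuous (pd c f) :=
  (hf.continuous_fderiv one_ne_zero).clm_apply continuous_const

lemma hasDerivAt_comp_segment {n : ℕ} {f : EuclideanSpace ℝ (Fin n) → ℝ} (hf : ContDiff ℝ 1 f)
    (x v : EuclideanSpace ℝ (Fin n)) (t : ℝ) :
    HasDerivAt (fun s : ℝ => f (x + s • v)) (∑ c, v c * pd c f (x + t • v)) t := by
  have h1 : HasDerivAt (fun s : ℝ => x + s • v) v t := by
    simpa using ((hasDerivAt_id t).smul_const v).const_add x
  have h2 := (hf.differentiable one_ne_zero (x + t • v)).hasFDerivAt.comp_hasDerivAt t h1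
  rwa [fderiv_apply_eq_sum_pd] at h2

lemma abs_sum_coord_mul_le {n : ℕ} (v : EuclideanSpace ℝ (Fin n)) (w : Fin n → ℝ) {M : ℝ}
    (hw : ∑ c, |w c| ≤ M) : |∑ c, v c * w c| ≤ ‖v‖ * M := by
  calc |∑ c, v c * w c| ≤ ∑ c, |v c * w c| := Finset.abs_sum_le_sum_abs _ _
    _ ≤ ∑ c, ‖v‖ * |w c| := by
        refine Finset.sum_le_sum fun c _ => ?_
        rw [abs_mul]
        exact mul_le_mul_of_nonneg_right (PiLp.norm_apply_le v c) (abs_nonneg _)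
    _ = ‖v‖ * ∑ c, |w c| := by rw [Finset.mul_sum]
    _ ≤ ‖v‖ * M := mul_le_mul_of_nonneg_left hw (norm_nonneg _)

lemma abs_increment_le {n : ℕ} {f : EuclideanSpace ℝ (Fin n) → ℝ} (hf : ContDiff ℝ 1 f)
    (x v : EuclideanSpace ℝ (Fin n)) {M : ℝ}
    (hM : ∀ t ∈ Set.Icc (0:ℝ) 1, ∑ c, |pd c f (x + t • v)| ≤ M) :
    ∀ t ∈ Set.Icc (0:ℝ) 1, |f (x + t • v) - f x| ≤ ‖v‖ * M * t := by
  intro t ht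
  have h := norm_image_sub_le_of_norm_deriv_le_segment' (f := fun s : ℝ => f (x + s • v))
    (a := 0) (b := 1) (C := ‖v‖ * M)
    (fun s _ => (hasDerivAt_comp_segment hf x v s).hasDerivWithinAt)
    (fun s hs => abs_sum_coord_mul_le v _ (hM s ⟨hs.1, hs.2.le⟩)) t ht
  simpa using h

/-- First-order Taylor remainder; the sharp factor `1/2` is not kept. -/
lemma abs_taylor_remainder_le {n : ℕ} {f : EuclideanSpace ℝ (Fin n) → ℝ} (hf : ContDiff ℝ 2 f)
    (x v : EuclideanSpace ℝ (Fin n)) {M : ℝ}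
    (hM : ∀ t ∈ Set.Icc (0:ℝ) 1, ∑ c, ∑ d, |pd d (pd c f) (x + t • v)| ≤ M) :
    |f (x + v) - f x - ∑ c, v c * pd c f x| ≤ ‖v‖ ^ 2 * M := by
  have hM0 : 0 ≤ M := le_trans (by positivity) (hM 0 (by simp))
  -- The derivative `g'(t) = ∑ v_c ∂_c f(x + tv)` along the segment varies by at most `‖v‖² M`.
  have key : ∀ t ∈ Set.Ico (0:ℝ) 1,
      ‖∑ c, v c * pd c f (x + t • v) - ∑ c, v c * pd c f x‖ ≤ ‖v‖ ^ 2 * M := by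
    intro t ht
    have hd : ∀ s : ℝ, HasDerivAt (fun s : ℝ => ∑ c, v c * pd c f (x + s • v))
        (∑ c, v c * ∑ d, v d * pd d (pd c f) (x + s • v)) s := fun s =>
      HasDerivAt.fun_sum fun c _ =>
        (hasDerivAt_comp_segment (contDiff_pd hf c) x v s).const_mul (v c)
    have h := norm_image_sub_le_of_norm_deriv_le_segment'
      (f := fun s : ℝ => ∑ c, v c * pd c f (x + s • v)) (a := 0) (b := 1) (C := ‖v‖ * (‖v‖ * M))
      (fun s _ => (hd s).hasDerivWithinAt)
      (fun s hs => by
        refine abs_sum_coord_mul_le v _ ?_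
        calc ∑ c, |∑ d, v d * pd d (pd c f) (x + s • v)|
            ≤ ∑ c, ‖v‖ * ∑ d, |pd d (pd c f) (x + s • v)| :=
              Finset.sum_le_sum fun c _ => abs_sum_coord_mul_le v _ le_rfl
          _ ≤ ‖v‖ * M := by
              rw [← Finset.mul_sum]
              exact mul_le_mul_of_nonneg_left (hM s ⟨hs.1, hs.2.le⟩) (norm_nonneg _))
      t ⟨ht.1, ht.2.le⟩
    simp only [zero_smul, add_zero, sub_zero] at h
    refine h.trans ?_
    have : 0 ≤ ‖v‖ * (‖v‖ * M) := by positivity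
    nlinarith [ht.2]
  have h := norm_image_sub_le_of_norm_deriv_le_segment_01'
    (f := fun s : ℝ => f (x + s • v) - s * ∑ c, v c * pd c f x) (C := ‖v‖ ^ 2 * M)
    (fun s _ => ((hasDerivAt_comp_segment (hf.of_le (by norm_num)) x v s).sub
      (hasDerivAt_mul_const _)).hasDerivWithinAt) key
  simp only [one_smul, zero_smul, add_zero, one_mul, zero_mul, sub_zero, Real.norm_eq_abs] at h
  rwa [sub_right_comm] at h

lemma abs_pd_coord_le {n : ℕ} {ζ : EuclideanSpace ℝ (Fin n) → EuclideanSpace ℝ (Fin n)}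
    (hζ : ContDiff ℝ 1 ζ) (x : EuclideanSpace ℝ (Fin n)) (i a : Fin n) :
    |pd i (fun y => ζ y a) x| ≤ ‖fderiv ℝ ζ x‖ := by
  have h : HasFDerivAt (fun y => ζ y a)
      ((EuclideanSpace.proj a : EuclideanSpace ℝ (Fin n) →L[ℝ] ℝ).comp (fderiv ℝ ζ x)) x :=
    (EuclideanSpace.proj a : EuclideanSpace ℝ (Fin n) →L[ℝ] ℝ).hasFDerivAt.comp x
      (hζ.differentiable one_ne_zero x).hasFDerivAt
  rw [pd, h.fderiv]
  calc |(fderiv ℝ ζ x (EuclideanSpace.single i 1)) a|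
      ≤ ‖fderiv ℝ ζ x (EuclideanSpace.single i 1)‖ := PiLp.norm_apply_le (fderiv ℝ ζ x (EuclideanSpace.single i 1)) a
    _ ≤ ‖fderiv ℝ ζ x‖ * ‖(EuclideanSpace.single i 1 : EuclideanSpace ℝ (Fin n))‖ :=
        ContinuousLinearMap.le_opNorm _ _
    _ = ‖fderiv ℝ ζ x‖ := by simp

/-- Expansion of the two factors `δ + u`, `δ + v` in the pullback. -/
lemma sum_mul_delta_add {n : ℕ} (K : Fin n → Fin n → ℝ) (u v : Fin n → ℝ) (i j : Fin n) :
    ∑ a, ∑ b, K a b * ((if a = i then (1:ℝ) else 0) + u a) * ((if b = j then (1:ℝ) else 0) + v b)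
      = K i j + ∑ a, K a j * u a + ∑ b, K i b * v b + ∑ a, ∑ b, K a b * u a * v b := by
  simp only [mul_add, add_mul, Finset.sum_add_distrib, mul_ite, ite_mul, mul_one, mul_zero,
    zero_mul, Finset.sum_ite_eq', Finset.sum_ite_irrel, Finset.sum_const_zero, Finset.mem_univ,
    if_true]
  ring

lemma abs_sum_mul_le {n : ℕ} {p q : Fin n → ℝ} {P Q : ℝ} (hp : ∀ a, |p a| ≤ P)
    (hq : ∀ a, |q a| ≤ Q) : |∑ a, p a * q a| ≤ n * (P * Q) := by
  calc |∑ a, p a * q a| ≤ ∑ a, |p a * q a| := Finset.abs_sum_le_sum_abs _ _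
    _ ≤ ∑ _a : Fin n, P * Q := Finset.sum_le_sum fun a _ => by
        rw [abs_mul]
        exact mul_le_mul (hp a) (hq a) (abs_nonneg _) ((abs_nonneg _).trans (hp a))
    _ = n * (P * Q) := by simp

/-- there is a constant `C = C(n)` such that for every `C¹` vector field `ζ`,
every `C²` matrix field `k`, every `x` and `Ψ = id + ζ`,
`‖Ψ*k(x) − k(x) − (L_ζ k)(x)‖ ≤ C (‖ζ(x)‖ + ‖Dζ(x)‖)² sup_{t∈[0,1]} (‖k‖+‖Dk‖+‖D²k‖)(x+tζ(x))`
(matrix norms taken componentwise). -/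
theorem pullback_taylor_second_order_estimate
    (n : ℕ) (hn : 1 ≤ n) :
    ∃ C : ℝ, 0 < C ∧
      ∀ (ζ : EuclideanSpace ℝ (Fin n) → EuclideanSpace ℝ (Fin n)),
        ContDiff ℝ 1 ζ →
      ∀ (k : EuclideanSpace ℝ (Fin n) → Fin n → Fin n → ℝ),
        (∀ a b, ContDiff ℝ 2 (fun x => k x a b)) →
      ∀ (x : EuclideanSpace ℝ (Fin n)) (i j : Fin n),
        |pullback ζ k x i j - k x i j - lieDer ζ k x i j|
          ≤ C * (‖ζ x‖ + ‖fderiv ℝ ζ x‖) ^ 2 *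
              ⨆ t ∈ Set.Icc (0:ℝ) 1,
                ((∑ a, ∑ b, |k (x + t • ζ x) a b|)
                  + (∑ a, ∑ b, ∑ c, |pd c (fun y => k y a b) (x + t • ζ x)|)
                  + ∑ a, ∑ b, ∑ c, ∑ d,
                      |pd d (pd c (fun y => k y a b)) (x + t • ζ x)|) := by
  refine ⟨((n:ℝ) + 1) ^ 2, by positivity, ?_⟩
  intro ζ hζ k hk x i j
  set F : ℝ → ℝ := fun t =>
    (∑ a, ∑ b, |k (x + t • ζ x) a b|)
      + (∑ a, ∑ b, ∑ c, |pd c (fun y => k y a b) (x + t • ζ x)|)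
      + ∑ a, ∑ b, ∑ c, ∑ d, |pd d (pd c (fun y => k y a b)) (x + t • ζ x)| with hFdef
  change _ ≤ _ * ⨆ t ∈ Set.Icc (0:ℝ) 1, F t
  have hk1 : ∀ a b, ContDiff ℝ 1 (fun x => k x a b) := fun a b => (hk a b).of_le (by norm_num)
  have hline : Continuous fun t : ℝ => x + t • ζ x := by fun_prop
  have hFc : Continuous F := by
    refine Continuous.add (Continuous.add ?_ ?_) ?_
    · exact continuous_finsetSum _ fun a _ => continuous_finsetSum _ fun b _ =>
        ((hk a b).continuous.comp hline).abs
    · exact continuous_finsetSum _ fun a _ => continuous_finsetSum _ fun b _ =>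
        continuous_finsetSum _ fun c _ => ((continuous_pd (hk1 a b) c).comp hline).abs
    · exact continuous_finsetSum _ fun a _ => continuous_finsetSum _ fun b _ =>
        continuous_finsetSum _ fun c _ => continuous_finsetSum _ fun d _ =>
          ((continuous_pd (contDiff_pd (hk a b) c) d).comp hline).abs
  have hFM := fun t ht => le_biSup_Icc_of_continuous hFc (t := t) ht
  set M : ℝ := ⨆ t ∈ Set.Icc (0:ℝ) 1, F t
  have single_le : ∀ (G : Fin n → Fin n → ℝ), (∀ a b, 0 ≤ G a b) → ∀ a b,
      G a b ≤ ∑ a, ∑ b, G a b := fun G hG a b =>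
    (Finset.single_le_sum (f := fun b => G a b) (fun b _ => hG a b) (Finset.mem_univ b)).trans
      (Finset.single_le_sum (f := fun a => ∑ b, G a b)
        (fun a _ => Finset.sum_nonneg fun b _ => hG a b) (Finset.mem_univ a))
  have hnn0 : ∀ t : ℝ, 0 ≤ ∑ a, ∑ b, |k (x + t • ζ x) a b| := fun t => by positivity
  have hnn1 : ∀ t : ℝ, 0 ≤ ∑ a, ∑ b, ∑ c, |pd c (fun y => k y a b) (x + t • ζ x)| :=
    fun t => by positivity
  have hnn2 : ∀ t : ℝ,
      0 ≤ ∑ a, ∑ b, ∑ c, ∑ d, |pd d (pd c (fun y => k y a b)) (x + t • ζ x)| :=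
    fun t => by positivity
  have hM0 : ∀ a b, ∀ t ∈ Set.Icc (0:ℝ) 1, |k (x + t • ζ x) a b| ≤ M := fun a b t ht => by
    have h1 := single_le (fun a b => |k (x + t • ζ x) a b|) (fun _ _ => by positivity) a b
    have h2 := hFM t ht
    simp only [hFdef] at h2
    linarith [hnn1 t, hnn2 t]
  have hM1 : ∀ a b, ∀ t ∈ Set.Icc (0:ℝ) 1,
      ∑ c, |pd c (fun y => k y a b) (x + t • ζ x)| ≤ M := fun a b t ht => by
    have h1 := single_le (fun a b => ∑ c, |pd c (fun y => k y a b) (x + t • ζ x)|)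
      (fun _ _ => by positivity) a b
    have h2 := hFM t ht
    simp only [hFdef] at h2
    linarith [hnn0 t, hnn2 t]
  have hM2 : ∀ a b, ∀ t ∈ Set.Icc (0:ℝ) 1,
      ∑ c, ∑ d, |pd d (pd c (fun y => k y a b)) (x + t • ζ x)| ≤ M := fun a b t ht => by
    have h1 := single_le (fun a b => ∑ c, ∑ d, |pd d (pd c (fun y => k y a b)) (x + t • ζ x)|)
      (fun _ _ => by positivity) a b
    have h2 := hFM t ht
    simp only [hFdef] at h2
    linarith [hnn0 t, hnn1 t]
  have h01 : (1:ℝ) ∈ Set.Icc (0:ℝ) 1 := by simp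
  have hMnn : 0 ≤ M := (abs_nonneg _).trans (hM0 i j 1 h01)
  have hk0 : ∀ a b, |k (x + ζ x) a b| ≤ M := fun a b => by simpa using hM0 a b 1 h01
  have hinc : ∀ a b, |k (x + ζ x) a b - k x a b| ≤ ‖ζ x‖ * M := fun a b => by
    simpa using abs_increment_le (hk1 a b) x (ζ x) (hM1 a b) 1 h01
  have htay := abs_taylor_remainder_le (hk i j) x (ζ x) (hM2 i j)
  have hu := abs_pd_coord_le hζ x i
  have hv := abs_pd_coord_le hζ x j
  have e2 := abs_sum_mul_le (fun a => hinc a j) hu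
  have e3 := abs_sum_mul_le (fun b => hinc i b) hv
  have e4 : |∑ a, (∑ b, k (x + ζ x) a b * pd j (fun y => ζ y b) x) * pd i (fun y => ζ y a) x|
      ≤ n * (n * (M * ‖fderiv ℝ ζ x‖) * ‖fderiv ℝ ζ x‖) :=
    abs_sum_mul_le (fun a => abs_sum_mul_le (fun b => hk0 a b) hv) hu
  have hsplit : pullback ζ k x i j - k x i j - lieDer ζ k x i j
      = (k (x + ζ x) i j - k x i j - ∑ c, ζ x c * pd c (fun y => k y i j) x)
        + ∑ a, (k (x + ζ x) a j - k x a j) * pd i (fun y => ζ y a) x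
        + ∑ b, (k (x + ζ x) i b - k x i b) * pd j (fun y => ζ y b) x
        + ∑ a, (∑ b, k (x + ζ x) a b * pd j (fun y => ζ y b) x) * pd i (fun y => ζ y a) x := by
    have hcomm : ∑ a, (∑ b, k (x + ζ x) a b * pd j (fun y => ζ y b) x) * pd i (fun y => ζ y a) x
        = ∑ a, ∑ b, k (x + ζ x) a b * pd i (fun y => ζ y a) x * pd j (fun y => ζ y b) x := by
      simp only [Finset.sum_mul, mul_right_comm]
    rw [hcomm, pullback, lieDer, sum_mul_delta_add (k (x + ζ x)) (fun a => pd i (fun y => ζ y a) x)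
      (fun b => pd j (fun y => ζ y b) x)]
    simp only [sub_mul, Finset.sum_sub_distrib]
    ring
  rw [hsplit]
  refine (abs_add_le _ _).trans ((add_le_add ((abs_add_le _ _).trans
    (add_le_add ((abs_add_le _ _).trans (add_le_add htay e2)) e3)) e4).trans ?_)
  have hA := norm_nonneg (ζ x)
  have hB := norm_nonneg (fderiv ℝ ζ x)
  set A := ‖ζ x‖
  set B := ‖fderiv ℝ ζ x‖
  have hn0 : (0:ℝ) ≤ n := Nat.cast_nonneg n
  -- The left side is `(A + n B)² M`.
  calc A ^ 2 * M + n * (A * M * B) + n * (A * M * B) + n * (n * (M * B) * B)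
      = (A + n * B) ^ 2 * M := by ring
    _ ≤ (((n:ℝ) + 1) * (A + B)) ^ 2 * M := by
        gcongr
        nlinarith [mul_nonneg hn0 hA]
    _ = ((n:ℝ) + 1) ^ 2 * (A + B) ^ 2 * M := by ring
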